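/- arXiv:1502.02719 — 5 statements merged into one kernel-verified Lean document; each statement's English description precedes it below -/
import Mathlib

section
/- Let M be a subset of an ℝ-tree with λ(M) > 0. Then there exists a Lebesgue-measurable subset A ⊆ [0,1] of positive Lebesgue measure such that A embeds isometrically into M. -/
/-!
The trace `D` of `M` on the given geodesic `φ` is a Borel subset of `[0, ∞)` of positive measure.
Countably many unit intervals `[n, n + 1]` cover `D`, so one of them meets `D` in positive measure.
Translating that piece of `D` into `[0, 1]` gives `A`, and `a ↦ φ (a + n)` embeds it
isometrically into `M`.
-/

/-- An ℝ-tree: a geodesic metric space satisfying the four-point condition. -/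
def IsRTree (T : Type*) [MetricSpace T] : Prop :=
  (∀ x y : T, ∃ φ : ℝ → T, φ 0 = x ∧ φ (dist x y) = y ∧
      ∀ s ∈ Set.Icc (0 : ℝ) (dist x y), ∀ t ∈ Set.Icc (0 : ℝ) (dist x y),
        dist (φ s) (φ t) = |s - t|) ∧
    ∀ a b c d : T, dist a b + dist c d ≤ max (dist a c + dist b d) (dist b c + dist a d)

/-- The segment `[x, y]` in an ℝ-tree, i.e. the metric interval between `x` and `y`. -/
def rSeg {T : Type*} [MetricSpace T] (x y : T) : Set T :=
  { z | dist x z + dist z y = dist x y }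

/-- `π` is the metric projection onto the segment `[x, y]`: `π u` is a nearest point
of `[x, y]` to `u`. -/
def IsProjOn {T : Type*} [MetricSpace T] (x y : T) (π : T → T) : Prop :=
  ∀ u : T, π u ∈ rSeg x y ∧ ∀ q ∈ rSeg x y, dist u (π u) ≤ dist u q

/-- `conv M`: the minimal subtree containing `M`, namely the union of the segments
between points of `M`. -/
def rConv {T : Type*} [MetricSpace T] (M : Set T) : Set T :=
  ⋃ (x ∈ M) (y ∈ M), rSeg x y

/-- `b` is a branching point of the subtree `S`: there are three distinct points
`x, y, z ∈ S \ {b}` whose segments to `b` pairwise intersect exactly in `{b}`. -/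
def IsBranchPoint {T : Type*} [MetricSpace T] (S : Set T) (b : T) : Prop :=
  b ∈ S ∧ ∃ x ∈ S, ∃ y ∈ S, ∃ z ∈ S,
    x ≠ b ∧ y ≠ b ∧ z ≠ b ∧ x ≠ y ∧ x ≠ z ∧ y ≠ z ∧
    rSeg x b ∩ rSeg y b = {b} ∧ rSeg x b ∩ rSeg z b = {b} ∧ rSeg y b ∩ rSeg z b = {b}

/-- `A` is negligible relative to the subtree `S`: `A` meets every geodesic segment
between points of `S` in a Lebesgue-null set (so `λ_S(A) = 0`). -/
def NegligibleIn {T : Type*} [MetricSpace T] (S A : Set T) : Prop :=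
  ∀ x ∈ S, ∀ y ∈ S, ∀ φ : ℝ → T,
    φ 0 = x → φ (dist x y) = y →
    (∀ s ∈ Set.Icc (0 : ℝ) (dist x y), ∀ t ∈ Set.Icc (0 : ℝ) (dist x y),
      dist (φ s) (φ t) = |s - t|) →
    MeasureTheory.volume (Set.Icc (0 : ℝ) (dist x y) ∩ φ ⁻¹' A) = 0

/-- `A` is measurable in the tree `T`: its preimage under every geodesic parametrization
is Lebesgue-measurable. -/
def SegMeasurable {T : Type*} [MetricSpace T] (A : Set T) : Prop :=
  ∀ x y : T, ∀ φ : ℝ → T,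
    φ 0 = x → φ (dist x y) = y →
    (∀ s ∈ Set.Icc (0 : ℝ) (dist x y), ∀ t ∈ Set.Icc (0 : ℝ) (dist x y),
      dist (φ s) (φ t) = |s - t|) →
    MeasurableSet (Set.Icc (0 : ℝ) (dist x y) ∩ φ ⁻¹' A)

/-- **Statement 9.** If `M` is a (measurable) subset of an ℝ-tree with `λ(M) > 0`, i.e. `M`
meets some geodesic segment of `conv(M)` in a set of positive Lebesgue measure, then there
is a measurable set `A ⊆ [0,1]` of positive measure which embeds isometrically into `M`. -/
theorem statement9 {T : Type*} [MetricSpace T] (hT : IsRTree T) (M : Set T)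
    (hmeas : SegMeasurable M)
    (hpos : ∃ x ∈ rConv M, ∃ y ∈ rConv M, ∃ φ : ℝ → T,
      φ 0 = x ∧ φ (dist x y) = y ∧
      (∀ s ∈ Set.Icc (0 : ℝ) (dist x y), ∀ t ∈ Set.Icc (0 : ℝ) (dist x y),
        dist (φ s) (φ t) = |s - t|) ∧
      0 < MeasureTheory.volume (Set.Icc (0 : ℝ) (dist x y) ∩ φ ⁻¹' M)) :
    ∃ A : Set ℝ, A ⊆ Set.Icc (0 : ℝ) 1 ∧ MeasurableSet A ∧
      0 < MeasureTheory.volume A ∧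
      ∃ e : A → T, Isometry e ∧ ∀ a : A, e a ∈ M := by
  obtain ⟨x, -, y, -, φ, h0, h1, hφ, hvol⟩ := hpos
  have hD := hmeas x y φ h0 h1 hφ
  set D : Set ℝ := Set.Icc (0 : ℝ) (dist x y) ∩ φ ⁻¹' M with hDdef
  have hcover : D ⊆ ⋃ n : ℕ, D ∩ Set.Icc (n : ℝ) (n + 1) := fun t ht =>
    Set.mem_iUnion.2 ⟨⌊t⌋₊, ht, Nat.floor_le ht.1.1, (Nat.lt_floor_add_one t).le⟩
  obtain ⟨n, hn⟩ := MeasureTheory.exists_measure_pos_of_not_measure_iUnion_null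
    (hvol.trans_le (MeasureTheory.measure_mono hcover)).ne'
  refine ⟨(fun t : ℝ => t + n) ⁻¹' (D ∩ Set.Icc (n : ℝ) (n + 1)), ?_, ?_, ?_,
    fun a => φ (a + n), ?_, fun a => a.2.1.2⟩
  · rintro t ⟨-, ht1, ht2⟩
    constructor <;> linarith
  · exact (measurable_add_const _) (hD.inter measurableSet_Icc)
  · rwa [MeasureTheory.measure_preimage_add_right]
  · refine Isometry.of_dist_eq fun a b => ?_
    rw [hφ _ a.2.1.1 _ b.2.1.1, Subtype.dist_eq, Real.dist_eq, add_sub_add_right_eq_sub]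
end

section
/- Let M be a compact subset of an ℝ-tree such that λ(M) = 0. Then λ_{conv(M)}(cl(Br(M))) = 0, where cl(Br(M)) denotes the closure of the set of branching points Br(M) taken in conv(M). -/
/-- The four-point condition alone, the only part of `IsRTree` most lemmas below need. -/
def FourPoint (T : Type*) [MetricSpace T] : Prop :=
  ∀ a b c d : T, dist a b + dist c d ≤ max (dist a c + dist b d) (dist b c + dist a d)

/-- `b` lies on each of the three segments joining `x`, `y` and `z`. -/
def IsMedian {T : Type*} [MetricSpace T] (x y z b : T) : Prop :=
  b ∈ rSeg x y ∧ b ∈ rSeg x z ∧ b ∈ rSeg y z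

/-- The branching points of `conv M` at distance at least `ε` from every point of `M`. -/
def farBranch {T : Type*} [MetricSpace T] (M : Set T) (ε : ℝ) : Set T :=
  { b | IsBranchPoint (rConv M) b ∧ ∀ m ∈ M, ε ≤ dist m b }

section RTree

variable {T : Type*} [MetricSpace T]

lemma rSeg_symm {x y b : T} (h : b ∈ rSeg x y) : b ∈ rSeg y x := by
  simp only [rSeg, Set.mem_ofPred_eq] at *
  linarith [dist_comm x b, dist_comm y b, dist_comm x y]

/-- If `[x, b]` and `[y, b]` meet only in `b`, then `b` lies between `x` and `y`: otherwise they
share the point of `[b, x]` at distance equal to the Gromov product `(x | y)_b` from `b`. -/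
lemma mem_rSeg_of_inter (hT : IsRTree T) {x y b : T}
    (h : rSeg x b ∩ rSeg y b = {b}) : b ∈ rSeg x y := by
  obtain ⟨φ, h0, h1, hφ⟩ := hT.1 b x
  set t := (dist b x + dist b y - dist x y) / 2 with ht
  have t1 := dist_triangle x b y
  have t2 := dist_triangle b x y
  have t3 := dist_triangle b y x
  have c1 := dist_comm x b
  have c2 := dist_comm x y
  have c3 := dist_comm y b
  have ht0 : 0 ≤ t := by linarith
  have htx : t ≤ dist b x := by linarith
  have hbc : dist b (φ t) = t := by
    have := hφ 0 ⟨le_rfl, dist_nonneg⟩ t ⟨ht0, htx⟩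
    rwa [h0, zero_sub, abs_neg, abs_of_nonneg ht0] at this
  have hxc : dist x (φ t) = dist b x - t := by
    have := hφ (dist b x) ⟨dist_nonneg, le_rfl⟩ t ⟨ht0, htx⟩
    rwa [h1, abs_of_nonneg (by linarith)] at this
  have c4 := dist_comm (φ t) b
  have c5 := dist_comm (φ t) x
  have hyc : dist y (φ t) ≤ dist b y - t := by
    rcases le_max_iff.1 (hT.2 y (φ t) b x) with h' | h' <;> linarith
  have t4 := dist_triangle y (φ t) b
  have hmem : φ t ∈ rSeg x b ∩ rSeg y b := by
    constructor <;> simp only [rSeg, Set.mem_ofPred_eq] <;> linarith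
  rw [h, Set.mem_singleton_iff] at hmem
  rw [hmem, dist_self] at hbc
  simp only [rSeg, Set.mem_ofPred_eq]
  linarith

/-- Any point of `[p, q]` lies on the way from `b` to `p` or from `b` to `q`. -/
lemma exists_extend (h4 : FourPoint T) {M : Set T} {x b : T} (hx : x ∈ rConv M) :
    ∃ p ∈ M, x ∈ rSeg p b := by
  simp only [rConv, Set.mem_iUnion] at hx
  obtain ⟨p, hp, q, hq, hx⟩ := hx
  simp only [rSeg, Set.mem_ofPred_eq] at hx ⊢
  have c := dist_comm x q
  rcases le_max_iff.1 (h4 p q x b) with h | h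
  · exact ⟨q, hq, by linarith [dist_triangle q x b]⟩
  · exact ⟨p, hp, by linarith [dist_triangle p x b]⟩

lemma mem_rSeg_extend (h4 : FourPoint T) {x y p b : T} (hxb : x ≠ b)
    (hp : x ∈ rSeg p b) (hb : b ∈ rSeg x y) : b ∈ rSeg p y := by
  simp only [rSeg, Set.mem_ofPred_eq] at *
  have hpos := dist_pos.2 hxb
  have t := dist_triangle p b y
  have c := dist_comm x b
  rcases le_max_iff.1 (h4 p b x y) with h | h <;> linarith

lemma mem_rSeg_of_dist_lt (h4 : FourPoint T) {x x' y b : T} (hd : dist x x' < dist x b)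
    (hb : b ∈ rSeg x y) : b ∈ rSeg x' y := by
  simp only [rSeg, Set.mem_ofPred_eq] at *
  have hnn : 0 ≤ dist x' b := dist_nonneg
  have t := dist_triangle x' b y
  have c1 := dist_comm b y
  have c2 := dist_comm x' y
  rcases le_max_iff.1 (h4 x y x' b) with h | h <;> linarith

lemma median_unique (h4 : FourPoint T) {x y z b b' : T} (h : IsMedian x y z b)
    (h' : IsMedian x y z b') : b = b' := by
  obtain ⟨h1, h2, h3⟩ := h
  obtain ⟨h1', h2', h3'⟩ := h'
  simp only [rSeg, Set.mem_ofPred_eq] at *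
  -- The distances from `b` to `x` and to `y` are Gromov products, hence the same for the other median.
  have c1 := dist_comm b y
  have c2 := dist_comm b' y
  have c3 := dist_comm b z
  have c4 := dist_comm b' z
  apply dist_le_zero.1
  rcases le_max_iff.1 (h4 x y b b') with h | h <;> linarith

lemma exists_median_of_isBranchPoint (hT : IsRTree T) {M : Set T} {b : T}
    (hb : IsBranchPoint (rConv M) b) :
    ∃ x ∈ M, ∃ y ∈ M, ∃ z ∈ M, IsMedian x y z b := by
  obtain ⟨-, x, hx, y, hy, z, hz, hxb, hyb, hzb, -, -, -, hxy, hxz, hyz⟩ := hb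
  have h4 : FourPoint T := hT.2
  have hxy := mem_rSeg_of_inter hT hxy
  have hxz := mem_rSeg_of_inter hT hxz
  have hyz := mem_rSeg_of_inter hT hyz
  obtain ⟨p, hp, hpx⟩ := exists_extend h4 (b := b) hx
  obtain ⟨q, hq, hqy⟩ := exists_extend h4 (b := b) hy
  obtain ⟨r, hr, hrz⟩ := exists_extend h4 (b := b) hz
  have key : ∀ {u v p q : T}, u ≠ b → v ≠ b → u ∈ rSeg p b → v ∈ rSeg q b →
      b ∈ rSeg u v → b ∈ rSeg p q := fun hu hv hpu hqv h =>
    rSeg_symm (mem_rSeg_extend h4 hv hqv (rSeg_symm (mem_rSeg_extend h4 hu hpu h)))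
  exact ⟨p, hp, q, hq, r, hr, key hxb hyb hpx hqy hxy, key hxb hzb hpx hrz hxz,
    key hyb hzb hqy hrz hyz⟩

lemma finite_farBranch (hT : IsRTree T) {M : Set T} (hM : IsCompact M) {ε : ℝ} (hε : 0 < ε) :
    (farBranch M ε).Finite := by
  have h4 : FourPoint T := hT.2
  obtain ⟨F, -, hF, hcov⟩ := hM.finite_cover_balls hε
  have hfin : (⋃ x ∈ F, ⋃ y ∈ F, ⋃ z ∈ F, { b | IsMedian x y z b }).Finite :=
    hF.biUnion fun x _ => hF.biUnion fun y _ => hF.biUnion fun z _ =>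
      Set.Subsingleton.finite fun _ hb _ hb' => median_unique h4 hb hb'
  refine hfin.subset ?_
  rintro b ⟨hb, hfar⟩
  have near : ∀ m ∈ M, ∃ m' ∈ F, dist m m' < dist m b := by
    intro m hm
    obtain ⟨m', hm', hlt⟩ := Set.mem_iUnion₂.1 (hcov hm)
    exact ⟨m', hm', (Metric.mem_ball.1 hlt).trans_le (hfar m hm)⟩
  obtain ⟨x, hx, y, hy, z, hz, hxy, hxz, hyz⟩ := exists_median_of_isBranchPoint hT hb
  obtain ⟨x', hx', dx⟩ := near x hx
  obtain ⟨y', hy', dy⟩ := near y hy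
  obtain ⟨z', hz', dz⟩ := near z hz
  have key : ∀ {u v u' v' : T}, dist u u' < dist u b → dist v v' < dist v b →
      b ∈ rSeg u v → b ∈ rSeg u' v' := fun hu hv h =>
    rSeg_symm (mem_rSeg_of_dist_lt h4 hv (rSeg_symm (mem_rSeg_of_dist_lt h4 hu h)))
  simp only [Set.mem_iUnion, Set.mem_ofPred_eq]
  exact ⟨x', hx', y', hy', z', hz', key dx dy hxy, key dx dz hxz, key dy dz hyz⟩

lemma closure_branch_subset (hT : IsRTree T) {M : Set T} (hM : IsCompact M) :
    closure { b : T | IsBranchPoint (rConv M) b } ⊆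
      M ∪ ⋃ n : ℕ, farBranch M (1 / ((n : ℝ) + 1)) := by
  intro p hp
  by_cases hpM : p ∈ M
  · exact Or.inl hpM
  right
  obtain ⟨δ, hδ, hball⟩ := Metric.isOpen_iff.1 hM.isClosed.isOpen_compl p hpM
  obtain ⟨n, hn⟩ := exists_nat_one_div_lt (half_pos hδ)
  -- Near `p` all branching points are far from `M`, so they form a finite, hence closed, set.
  have hsub : Metric.ball p (δ / 2) ∩ { b : T | IsBranchPoint (rConv M) b } ⊆
      farBranch M (1 / ((n : ℝ) + 1)) := by
    rintro b ⟨hbp, hb⟩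
    refine ⟨hb, fun m hm => ?_⟩
    have hmp : δ ≤ dist m p := by
      by_contra! hlt
      exact hball (Metric.mem_ball.2 hlt) hm
    linarith [dist_triangle m b p, Metric.mem_ball.1 hbp]
  have hcl : IsClosed (farBranch M (1 / ((n : ℝ) + 1))) :=
    (finite_farBranch hT hM Nat.one_div_pos_of_nat).isClosed
  exact Set.mem_iUnion.2 ⟨n, closure_minimal hsub hcl
    (Metric.isOpen_ball.inter_closure ⟨Metric.mem_ball_self (half_pos hδ), hp⟩)⟩

end RTree

/-- **Statement 13.** Let `M` be a compact subset of an ℝ-tree with `λ(M) = 0`. Then the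
closure (taken in `conv(M)`) of the set of branching points of `conv(M)` is negligible in
`conv(M)`, i.e. `λ_{conv(M)}(cl(Br(M))) = 0`. -/
theorem statement13 {T : Type*} [MetricSpace T] (hT : IsRTree T) (M : Set T)
    (hM : IsCompact M) (hneg : NegligibleIn (rConv M) M) :
    NegligibleIn (rConv M)
      (closure { b : T | IsBranchPoint (rConv M) b } ∩ rConv M) := by
  intro x hx y hy φ h0 h1 hφ
  set C := ⋃ n : ℕ, farBranch M (1 / ((n : ℝ) + 1))
  have hC : C.Countable := Set.countable_iUnion fun n =>
    (finite_farBranch hT hM Nat.one_div_pos_of_nat).countable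
  have hinj : Set.InjOn φ (Set.Icc 0 (dist x y) ∩ φ ⁻¹' C) := by
    intro s hs t ht hst
    have := hφ s hs.1 t ht.1
    rw [hst, dist_self] at this
    linarith [abs_eq_zero.1 this.symm]
  have hcount : (Set.Icc 0 (dist x y) ∩ φ ⁻¹' C).Countable :=
    Set.MapsTo.countable_of_injOn (f := φ) (fun _ hs => hs.2) hinj hC
  refine MeasureTheory.measure_mono_null ?_ (MeasureTheory.measure_union_null
    (hneg x hx y hy φ h0 h1 hφ) (hcount.measure_zero _))
  rintro s ⟨hs, hcl, -⟩
  exact (closure_branch_subset hT hM hcl).imp (⟨hs, ·⟩) (⟨hs, ·⟩)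
end

section
/- Let M be a compact subset of an ℝ-tree T. Then conv(M), the union of the segments [x,y] over all x,y ∈ M, is compact (in particular, separable). Indeed, the map Φ : M × M × [0,1] → conv(M) defined by Φ(x,y,t) := φ_{x,y}(t·d(x,y)) is continuous and surjective. -/
/-- A point `z` of a segment `[x, y]` is close to every `w` whose distances to the two end points
hardly exceed those of `z`. -/
lemma IsRTree.dist_le_of_mem_rSeg {T : Type*} [MetricSpace T] (hT : IsRTree T) {x y z : T}
    (hz : z ∈ rSeg x y) (w : T) :
    dist w z ≤ max (dist w y - dist z y) (dist w x - dist x z) := by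
  have h := hT.2 z w x y
  have hz' : dist x z + dist z y = dist x y := hz
  rw [dist_comm z w, dist_comm z x] at h
  rcases le_max_iff.1 h with h | h
  · exact le_max_of_le_left (by linarith)
  · exact le_max_of_le_right (by linarith)

/-- Points of a segment are determined by their distance to the first end point. -/
lemma IsRTree.eq_of_mem_rSeg {T : Type*} [MetricSpace T] (hT : IsRTree T) {x y z w : T}
    (hz : z ∈ rSeg x y) (hw : w ∈ rSeg x y) (h : dist x z = dist x w) : w = z := by
  have hz' : dist x z + dist z y = dist x y := hz
  have hw' : dist x w + dist w y = dist x y := hw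
  refine dist_le_zero.1 ((hT.dist_le_of_mem_rSeg hz w).trans (max_le ?_ ?_))
  · linarith
  · rw [dist_comm w x]; linarith

lemma IsRTree.exists_mem_rSeg {T : Type*} [MetricSpace T] (hT : IsRTree T) (x y : T) {t : ℝ}
    (ht : t ∈ Set.Icc (0 : ℝ) 1) :
    ∃ z ∈ rSeg x y, dist x z = t * dist x y := by
  obtain ⟨φ, h0, h1, h⟩ := hT.1 x y
  have hd : 0 ≤ dist x y := dist_nonneg
  have hs0 : 0 ≤ t * dist x y := mul_nonneg ht.1 hd
  have hs1 : t * dist x y ≤ dist x y := mul_le_of_le_one_left hd ht.2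
  have e0 := h 0 ⟨le_rfl, hd⟩ _ ⟨hs0, hs1⟩
  have e1 := h _ ⟨hs0, hs1⟩ _ ⟨hd, le_rfl⟩
  rw [h0, zero_sub, abs_neg, abs_of_nonneg hs0] at e0
  rw [h1, abs_of_nonpos (by linarith)] at e1
  refine ⟨φ (t * dist x y), ?_, e0⟩
  change _ + _ = _
  rw [e0, e1]; ring

/-- **Statement 15.** If `M` is a compact subset of an ℝ-tree `T`, then `conv(M)` is
compact (in particular separable); indeed the map `Φ(x, y, t) = φ_{x,y}(t·d(x,y))`
(characterized by `Φ(x,y,t) ∈ [x,y]` and `d(x, Φ(x,y,t)) = t·d(x,y)`) is a continuous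
surjection of `M × M × [0,1]` onto `conv(M)`. -/
theorem statement15 {T : Type*} [MetricSpace T] (hT : IsRTree T) (M : Set T)
    (hM : IsCompact M) :
    IsCompact (rConv M) ∧ TopologicalSpace.IsSeparable (rConv M) ∧
      ∃ Φ : M × M × Set.Icc (0 : ℝ) 1 → T, Continuous Φ ∧ Set.range Φ = rConv M ∧
        ∀ p : M × M × Set.Icc (0 : ℝ) 1,
          Φ p ∈ rSeg (p.1 : T) (p.2.1 : T) ∧
          dist (p.1 : T) (Φ p) = (p.2.2 : ℝ) * dist (p.1 : T) (p.2.1 : T) := by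
  have hex : ∀ p : M × M × Set.Icc (0 : ℝ) 1, ∃ z ∈ rSeg (p.1 : T) (p.2.1 : T),
      dist (p.1 : T) z = (p.2.2 : ℝ) * dist (p.1 : T) (p.2.1 : T) :=
    fun p => hT.exists_mem_rSeg _ _ p.2.2.2
  choose Φ hΦ hΦd using hex
  have hΦd' : ∀ p, dist (Φ p) (p.2.1 : T) =
      (1 - (p.2.2 : ℝ)) * dist (p.1 : T) (p.2.1 : T) := fun p => by
    have h : _ + _ = _ := hΦ p
    linarith [hΦd p]
  have hcont : Continuous Φ := by
    refine continuous_iff_continuousAt.2 fun p => ?_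
    -- A continuous majorant of `dist (Φ q) (Φ p)` that vanishes at `q = p`.
    let g : M × M × Set.Icc (0 : ℝ) 1 → ℝ := fun q =>
      max (dist (q.2.1 : T) (p.2.1 : T) + (1 - (q.2.2 : ℝ)) * dist (q.1 : T) (q.2.1 : T)
          - (1 - (p.2.2 : ℝ)) * dist (p.1 : T) (p.2.1 : T))
        (dist (q.1 : T) (p.1 : T) + (q.2.2 : ℝ) * dist (q.1 : T) (q.2.1 : T)
          - (p.2.2 : ℝ) * dist (p.1 : T) (p.2.1 : T))
    have hg : Continuous g := by fun_prop
    have hgp : g p = 0 := by simp [g]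
    have hle : ∀ q, dist (Φ q) (Φ p) ≤ g q := fun q => by
      refine (hT.dist_le_of_mem_rSeg (hΦ p) (Φ q)).trans (max_le_max ?_ ?_)
      · linarith [dist_triangle (Φ q) (q.2.1 : T) (p.2.1 : T), hΦd' p, hΦd' q]
      · linarith [dist_triangle (Φ q) (q.1 : T) (p.1 : T), hΦd p, hΦd q,
          dist_comm (Φ q) (q.1 : T)]
    refine tendsto_iff_dist_tendsto_zero.2
      (squeeze_zero (fun _ => dist_nonneg) hle ?_)
    simpa [hgp] using hg.tendsto p
  have hrange : Set.range Φ = rConv M := by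
    ext z
    simp only [rConv, Set.mem_iUnion, Set.mem_range]
    constructor
    · rintro ⟨p, rfl⟩
      exact ⟨p.1, p.1.2, p.2.1, p.2.1.2, hΦ p⟩
    · rintro ⟨x, hx, y, hy, hz⟩
      have hz' : dist x z + dist z y = dist x y := hz
      have hle : dist x z ≤ dist x y := by linarith [dist_nonneg (x := z) (y := y)]
      -- For `x = y` the quotient is `0 / 0 = 0`, which is also a valid parameter.
      let p : M × M × Set.Icc (0 : ℝ) 1 := (⟨x, hx⟩, ⟨y, hy⟩,
        ⟨dist x z / dist x y, div_nonneg dist_nonneg dist_nonneg,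
          div_le_one_of_le₀ hle dist_nonneg⟩)
      refine ⟨p, hT.eq_of_mem_rSeg hz (hΦ p) ?_⟩
      refine Eq.trans ?_ (hΦd p).symm
      change dist x z = dist x z / dist x y * dist x y
      refine (div_mul_cancel_of_imp fun h => ?_).symm
      exact le_antisymm (h ▸ hle) dist_nonneg
  have hcompact : IsCompact (rConv M) := by
    have : CompactSpace M := isCompact_iff_compactSpace.1 hM
    exact hrange ▸ isCompact_range hcont
  exact ⟨hcompact, hcompact.isSeparable, Φ, hcont, hrange, fun p => ⟨hΦ p, hΦd p⟩⟩
end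

section
/- Let X be a real normed space, let x_1*, …, x_n* be continuous linear functionals on X, and let C = ∩_{i=1}^n {x ∈ X : x_i*(x) < 1}. Let A ⊆ X ∖ C have the property that for every pair of distinct points x, y ∈ A, the midpoint (x+y)/2 belongs to C. Then the cardinality of A is at most n. -/
/-!
Every point of `A` violates at least one of the `n` constraints `φ i x < 1`. Two distinct points
cannot violate the same one, since the closed halfspace `{x | 1 ≤ φ i x}` is convex and would then
contain their midpoint. Choosing a violated constraint for each point is thus an injection of `A`
into `Fin n`.
-/

/-- **Statement 16.** Let `X` be a real normed space, `x₁*, …, xₙ*` continuous linear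
functionals, and `C = ⋂ᵢ {x : xᵢ*(x) < 1}`. If `A ⊆ X ∖ C` is such that the midpoint of
any two distinct points of `A` lies in `C`, then `A` has at most `n` elements. -/
theorem statement16 {X : Type*} [NormedAddCommGroup X] [NormedSpace ℝ X] (n : ℕ)
    (φ : Fin n → X →L[ℝ] ℝ) (A : Set X)
    (hA : ∀ a ∈ A, a ∉ ⋂ i, { x : X | φ i x < 1 })
    (hmid : ∀ a ∈ A, ∀ b ∈ A, a ≠ b → (2 : ℝ)⁻¹ • (a + b) ∈ ⋂ i, { x : X | φ i x < 1 }) :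
    Cardinal.mk A ≤ n := by
  have h : ∀ a : A, ∃ i, 1 ≤ φ i a := fun a => by
    simpa using hA a a.2
  -- Each `a ∈ A` is assigned a constraint `f a` that it violates.
  choose f hf using h
  have hinj : Function.Injective f := by
    intro a b hab
    by_contra hne
    -- A constraint violated at both `a` and `b` is violated at their midpoint.
    have hm := Set.mem_iInter.1
      (hmid a a.2 b b.2 (fun h => hne (Subtype.ext h))) (f a)
    have ha := hf a
    have hb := hf b
    rw [← hab] at hb
    simp only [Set.mem_ofPred_eq, map_smul, map_add, smul_eq_mul] at hm
    linarith
  simpa using Cardinal.mk_le_of_injective (Equiv.ulift.symm.injective.comp hinj)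
end

section
/- Let M = {x_0, x_1, …, x_n} be a finite subset of an ℝ-tree with sep(M) > 0, and for 0 ≤ i ≠ j ≤ n define f_{ij} : M → ℝ by f_{ij}(z) := d(x_j, π_{x_i x_j}(z)). Then: (1) each f_{ij} is 1-Lipschitz and |f_{ij}(x_i) − f_{ij}(x_j)| = d(x_i, x_j); (2) for any x ≠ y in M with {x,y} ≠ {x_i, x_j}, |f_{ij}(x) − f_{ij}(y)| ≤ (1 − sep(M)/diam(M))·d(x,y); (3) consequently, for any two distinct ordered pairs (i,j) ≠ (k,l) of distinct indices, the Lipschitz constant of (f_{ij} + f_{kl})/2 is at most 1 − sep(M)/(2·diam(M)). -/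
/-- The distance from an endpoint of a segment to a projection is a Gromov product. -/
theorem dist_proj_eq {T : Type*} [MetricSpace T] (hT : IsRTree T) {x y : T} {π : T → T}
    (hπ : IsProjOn x y π) (z : T) :
    dist y (π z) = (dist z y + dist x y - dist z x) / 2 := by
  obtain ⟨φ, h0, h1, hφ⟩ := hT.1 x y
  obtain ⟨hm, hn⟩ := hπ z
  have t1 := dist_triangle z x y
  have t2 := dist_triangle x z y
  have t3 := dist_triangle z y x
  rw [dist_comm y x] at t3
  rw [dist_comm x z] at t2
  -- the position on `[x, y]` of the projection of `z`
  set t := (dist z x + dist x y - dist z y) / 2 with ht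
  have ht0 : 0 ≤ t := by linarith
  have ht1 : t ≤ dist x y := by linarith
  have d0 : dist x (φ t) = t := by
    have := hφ 0 ⟨le_rfl, dist_nonneg⟩ t ⟨ht0, ht1⟩
    rwa [h0, zero_sub, abs_neg, abs_of_nonneg ht0] at this
  have d1 : dist (φ t) y = dist x y - t := by
    have := hφ t ⟨ht0, ht1⟩ (dist x y) ⟨dist_nonneg, le_rfl⟩
    rw [h1, abs_of_nonpos (by linarith)] at this
    linarith
  have hq : φ t ∈ rSeg x y := by
    show dist x (φ t) + dist (φ t) y = dist x y
    rw [d0, d1]; ring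
  have hle := hn _ hq
  have hfour := hT.2 z (φ t) x y
  have hmax : max (dist z x + dist (φ t) y) (dist (φ t) x + dist z y)
      ≤ (dist z x + dist x y + dist z y) / 2 := by
    rw [dist_comm (φ t) x, d0, d1]
    apply max_le <;> linarith
  have hm' : dist x (π z) + dist (π z) y = dist x y := hm
  have u1 := dist_triangle z (π z) x
  have u2 := dist_triangle z (π z) y
  rw [dist_comm (π z) x] at u1
  rw [dist_comm y (π z)]
  linarith

/-- **Statement 19.** Let `M = {x₀, …, xₙ}` be a finite subset of an ℝ-tree with
`sep(M) > 0`, and let `π i j` denote the metric projection onto the segment `[xᵢ, xⱼ]`.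
Define `f_{ij}(z) = d(xⱼ, π_{xᵢxⱼ}(z))`. Then:
(1) each `f_{ij}` is 1-Lipschitz on `M` and `|f_{ij}(xᵢ) - f_{ij}(xⱼ)| = d(xᵢ, xⱼ)`;
(2) for `x ≠ y` in `M` with `{x,y} ≠ {xᵢ,xⱼ}`,
    `|f_{ij}(x) - f_{ij}(y)| ≤ (1 - sep(M)/diam(M))·d(x,y)`;
(3) for distinct ordered pairs `(i,j) ≠ (k,l)`, `(f_{ij} + f_{kl})/2` has Lipschitz
    constant at most `1 - sep(M)/(2·diam(M))` on `M`. -/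
theorem statement19 {T : Type*} [MetricSpace T] (hT : IsRTree T) (n : ℕ)
    (x : Fin (n + 1) → T) (hx : Function.Injective x)
    (sep : ℝ)
    (hsep : sep = (1 / 2) * sInf { r : ℝ | ∃ i j k : Fin (n + 1),
      i ≠ j ∧ i ≠ k ∧ j ≠ k ∧ r = dist (x i) (x j) + dist (x i) (x k) - dist (x j) (x k) })
    (hpos : 0 < sep)
    (π : Fin (n + 1) → Fin (n + 1) → T → T)
    (hπ : ∀ i j, IsProjOn (x i) (x j) (π i j)) :
    (∀ i j, i ≠ j →
      (∀ a ∈ Set.range x, ∀ b ∈ Set.range x,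
        |dist (x j) (π i j a) - dist (x j) (π i j b)| ≤ dist a b) ∧
      |dist (x j) (π i j (x i)) - dist (x j) (π i j (x j))| = dist (x i) (x j)) ∧
    (∀ i j, i ≠ j → ∀ a ∈ Set.range x, ∀ b ∈ Set.range x, a ≠ b →
      ¬((a = x i ∧ b = x j) ∨ (a = x j ∧ b = x i)) →
      |dist (x j) (π i j a) - dist (x j) (π i j b)| ≤
        (1 - sep / Metric.diam (Set.range x)) * dist a b) ∧
    (∀ i j k l, i ≠ j → k ≠ l → (i, j) ≠ (k, l) →
      ∀ a ∈ Set.range x, ∀ b ∈ Set.range x,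
        |(dist (x j) (π i j a) + dist (x l) (π k l a)) / 2 -
            (dist (x j) (π i j b) + dist (x l) (π k l b)) / 2| ≤
          (1 - sep / (2 * Metric.diam (Set.range x))) * dist a b) := by
  have hf : ∀ i j z, dist (x j) (π i j z)
      = (dist z (x j) + dist (x i) (x j) - dist z (x i)) / 2 :=
    fun i j z => dist_proj_eq hT (hπ i j) z
  set S := { r : ℝ | ∃ i j k : Fin (n + 1),
      i ≠ j ∧ i ≠ k ∧ j ≠ k ∧ r = dist (x i) (x j) + dist (x i) (x k) - dist (x j) (x k) } with hS
  have hbdd : BddBelow S := by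
    refine ⟨0, ?_⟩
    rintro r ⟨i, j, k, -, -, -, rfl⟩
    have := dist_triangle_left (x j) (x k) (x i)
    linarith
  have hsepr : ∀ p q r, p ≠ q → p ≠ r → q ≠ r →
      2 * sep ≤ dist (x p) (x q) + dist (x p) (x r) - dist (x q) (x r) := by
    intro p q r h1 h2 h3
    have := csInf_le hbdd ⟨p, q, r, h1, h2, h3, rfl⟩
    linarith
  have hdiam : ∀ p q, dist (x p) (x q) ≤ Metric.diam (Set.range x) := fun p q =>
    Metric.dist_le_diam_of_mem (Set.finite_range x).isBounded ⟨p, rfl⟩ ⟨q, rfl⟩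
  have hsd : sep ≤ Metric.diam (Set.range x) := by
    -- `sInf ∅ = 0`, so `sep > 0` provides three distinct points
    have hne : S.Nonempty := by
      by_contra h
      rw [Set.not_nonempty_iff_eq_empty] at h
      rw [h, Real.sInf_empty] at hsep
      linarith
    obtain ⟨r, p, q, s, h1, h2, h3, -⟩ := hne
    have := hsepr p q s h1 h2 h3
    have := dist_triangle_left (x p) (x s) (x q)
    have := hdiam p q
    rw [dist_comm (x q) (x p)] at *
    linarith
  set D := Metric.diam (Set.range x) with hD
  have hDpos : 0 < D := hpos.trans_le hsd
  have htri : ∀ p q r, |dist (x p) (x r) - dist (x q) (x r)| ≤ dist (x p) (x q) :=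
    fun p q r => abs_dist_sub_le _ _ _
  have hstri : ∀ p q r, p ≠ q → p ≠ r → q ≠ r →
      |dist (x p) (x r) - dist (x q) (x r)| ≤ dist (x p) (x q) - 2 * sep := by
    intro p q r h1 h2 h3
    have e1 := hsepr p q r h1 h2 h3
    have e2 := hsepr q p r h1.symm h3 h2
    rw [dist_comm (x q) (x p)] at e2
    rw [abs_le]; constructor <;> linarith
  have hlip : ∀ i j p q, |dist (x j) (π i j (x p)) - dist (x j) (π i j (x q))|
      ≤ dist (x p) (x q) := by
    intro i j p q
    rw [hf, hf]
    have e1 := abs_le.1 (htri p q j)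
    have e2 := abs_le.1 (htri p q i)
    rw [abs_le]; constructor <;> linarith
  have hadd : ∀ i j p q, i ≠ j → p ≠ q → ¬((p = i ∧ q = j) ∨ (p = j ∧ q = i)) →
      |dist (x j) (π i j (x p)) - dist (x j) (π i j (x q))| ≤ dist (x p) (x q) - sep := by
    intro i j p q hij hpq hne
    rw [hf, hf]
    have e1 := abs_le.1 (htri p q j)
    have e2 := abs_le.1 (htri p q i)
    have key : (p ≠ j ∧ q ≠ j) ∨ (p ≠ i ∧ q ≠ i) := by grind
    rcases key with ⟨h1, h2⟩ | ⟨h1, h2⟩ <;>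
    · have e3 := abs_le.1 (hstri p q _ hpq h1 h2)
      rw [abs_le]; constructor <;> linarith
  have hscale : ∀ p q, sep / D * dist (x p) (x q) ≤ sep := by
    intro p q
    calc sep / D * dist (x p) (x q) ≤ sep / D * D := by
          have := hdiam p q
          gcongr
      _ = sep := by field_simp
  refine ⟨?_, ?_, ?_⟩
  · intro i j _
    refine ⟨?_, ?_⟩
    · rintro _ ⟨p, rfl⟩ _ ⟨q, rfl⟩
      exact hlip i j p q
    · rw [hf, hf, dist_self, dist_self, dist_comm (x j) (x i)]
      rw [abs_of_nonneg] <;> linarith [dist_nonneg (x := x i) (y := x j)]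
  · rintro i j hij _ ⟨p, rfl⟩ _ ⟨q, rfl⟩ hpq hne
    simp only [hx.eq_iff, ne_eq] at hpq hne
    linarith [hadd i j p q hij hpq hne, hscale p q]
  · rintro i j k l hij hkl hne _ ⟨p, rfl⟩ _ ⟨q, rfl⟩
    by_cases hpq : p = q
    · simp [hpq]
    have hs := hscale p q
    have hhalf : sep / (2 * D) * dist (x p) (x q) = sep / D * dist (x p) (x q) / 2 := by
      field_simp
    have l1 := abs_le.1 (hlip i j p q)
    have l2 := abs_le.1 (hlip k l p q)
    by_cases h1 : (p = i ∧ q = j) ∨ (p = j ∧ q = i)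
    · by_cases h2 : (p = k ∧ q = l) ∨ (p = l ∧ q = k)
      · have h3 : k = j ∧ l = i := by grind
        obtain ⟨rfl, rfl⟩ := h3
        have hd : sep / D ≤ 1 := (div_le_one hDpos).2 hsd
        have hm := mul_le_of_le_one_left (dist_nonneg (x := x p) (y := x q)) hd
        have hd0 := dist_nonneg (x := x p) (y := x q)
        simp only [hf]
        rw [abs_le]; constructor <;> linarith
      · have e := abs_le.1 (hadd k l p q hkl hpq h2)
        rw [abs_le]; constructor <;> linarith
    · have e := abs_le.1 (hadd i j p q hij hpq h1)
      rw [abs_le]; constructor <;> linarith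
end
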